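/- Let L be an even lattice in V, U an isotropic subspace with U = ℚ-span of I where I = U ∩ L, and let Ĩ ⊆ L* be a ℤ-submodule pairing unimodularly with I. Set I^⊥_{L*} = U^⊥ ∩ L* and Ĩ_L = {ũ ∈ Ĩ : there exists ν ∈ L with (ũ, λ) = (ν, λ) for all λ ∈ I}. Then L* = I^⊥_{L*} ⊕ Ĩ and L + I^⊥_{L*} = I^⊥_{L*} ⊕ Ĩ_L as internal direct sums of ℤ-modules: every μ ∈ L* is uniquely the sum of an element of I^⊥_{L*} and an element of Ĩ, and every μ ∈ L + I^⊥_{L*} is uniquely the sum of an element of I^⊥_{L*} and an element of Ĩ_L. -/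

import Mathlib

/-- The subspace orthogonal to `U` with respect to the bilinear form `Φ`. -/
def perp {V : Type*} [AddCommGroup V] [Module ℚ V]
    (Φ : V →ₗ[ℚ] V →ₗ[ℚ] ℚ) (U : Submodule ℚ V) : Submodule ℚ V where
  carrier := {v | ∀ u ∈ U, Φ u v = 0}
  add_mem' := by
    intro a b ha hb u hu
    simp only [Set.mem_setOf_eq] at ha hb ⊢
    rw [map_add, ha u hu, hb u hu, add_zero]
  zero_mem' := by
    intro u _
    exact map_zero (Φ u)
  smul_mem' := by
    intro c a ha u hu
    simp only [Set.mem_setOf_eq] at ha ⊢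
    rw [map_smul, ha u hu, smul_zero]

/-- The dual lattice \`L* = {v ∈ V : (v, L) ⊆ ℤ}\` of \`L\`, as a subset of \`V\`. -/
def dualL {V : Type*} [AddCommGroup V] [Module ℚ V]
    (Φ : V →ₗ[ℚ] V →ₗ[ℚ] ℚ) (L : Submodule ℤ V) : Set V :=
  {v | ∀ x ∈ L, ∃ n : ℤ, Φ v x = (n : ℚ)}

/-- The pairing between the ℤ-submodules \`It\` and \`I\` of \`V\` is unimodular: it is
ℤ-valued, and every ℤ-linear functional on \`I\` is represented by a unique element
of \`It\`. -/
def Unimodular {V : Type*} [AddCommGroup V] [Module ℚ V]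
    (Φ : V →ₗ[ℚ] V →ₗ[ℚ] ℚ) (It I : Submodule ℤ V) : Prop :=
  (∀ x ∈ It, ∀ y ∈ I, ∃ n : ℤ, Φ x y = (n : ℚ)) ∧
  ∀ f : ↥I →ₗ[ℤ] ℤ, ∃! x : V, x ∈ It ∧ ∀ y : ↥I, Φ x (y : V) = (f y : ℚ)

/-! Restriction to `I` maps `I* = {v ∈ V : (v, I) ⊆ ℤ}` to `Hom(I, ℤ)` with kernel `I^⊥`, and
unimodularity says that it maps `Ĩ ⊆ I*` bijectively onto `Hom(I, ℤ)`; hence `I* = I^⊥ ⊕ Ĩ`. By the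
modular law this splitting passes to every submodule of `I*` that contains `Ĩ`, in particular to
`L* = I^⊥_{L*} ⊕ Ĩ`, and from there to every submodule of `L*` that contains `I^⊥_{L*}`, in
particular to `L + I^⊥_{L*}`. Finally `Ĩ ∩ (L + I^⊥_{L*}) = Ĩ_L`, because two elements of `L*` have
the same restriction to `I` exactly when they differ by an element of `I^⊥_{L*}`. -/

theorem existsUnique_add_of_disjoint_of_mem_sup {R M : Type*} [Ring R] [AddCommGroup M]
    [Module R M] {p q : Submodule R M} (hpq : Disjoint p q) {x : M} (hx : x ∈ p ⊔ q) :
    ∃! u : M × M, u.1 ∈ p ∧ u.2 ∈ q ∧ x = u.1 + u.2 := by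
  obtain ⟨a, ha, b, hb, rfl⟩ := Submodule.mem_sup.mp hx
  refine ⟨(a, b), ⟨ha, hb, rfl⟩, ?_⟩
  rintro ⟨a', b'⟩ ⟨ha', hb', hab⟩
  have hdiff : a' - a + (b' - b) = 0 := by
    rw [← add_sub_add_comm, ← hab, sub_self]
  obtain ⟨hfst, hsnd⟩ : a' - a = 0 ∧ b' - b = 0 :=
    Submodule.disjoint_iff_add_eq_zero.mp hpq (p.sub_mem ha' ha) (q.sub_mem hb' hb) hdiff
  exact Prod.ext (sub_eq_zero.mp hfst) (sub_eq_zero.mp hsnd)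

section DualSubmodule

variable {R S M : Type*} [CommRing R] [Field S] [AddCommGroup M] [Algebra R S] [Module R M]
  [Module S M] [IsScalarTower R S M]

/-- The left orthogonal complement `{v : (v, y) = 0 for all y ∈ N}` of an `R`-submodule `N`, as an
`R`-submodule. The argument `v` stands on the left, as in the dual lattice and unlike in `perp`. -/
def leftPerp (B : LinearMap.BilinForm S M) (N : Submodule R M) : Submodule R M where
  carrier := {v | ∀ y ∈ N, B v y = 0}
  add_mem' hv hw y hy := by rw [map_add, LinearMap.add_apply, hv y hy, hw y hy, add_zero]
  zero_mem' y _ := by rw [map_zero, LinearMap.zero_apply]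
  smul_mem' r v hv y hy := by
    rw [LinearMap.map_smul_of_tower, LinearMap.smul_apply, hv y hy, smul_zero]

variable {B : LinearMap.BilinForm S M} {N N' D : Submodule R M}

theorem mem_leftPerp {v : M} : v ∈ leftPerp B N ↔ ∀ y ∈ N, B v y = 0 :=
  Iff.rfl

theorem dualSubmodule_anti (h : N ≤ N') : B.dualSubmodule N' ≤ B.dualSubmodule N :=
  fun _ hv y hy => hv y (h hy)

theorem leftPerp_le_dualSubmodule : leftPerp B N ≤ B.dualSubmodule N :=
  fun v hv y hy => by rw [hv y hy]; exact zero_mem _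

theorem sub_mem_leftPerp_iff {v w : M} :
    v - w ∈ leftPerp B N ↔ ∀ y ∈ N, B v y = B w y := by
  simp only [mem_leftPerp, map_sub, LinearMap.sub_apply, sub_eq_zero]

theorem mem_sup_leftPerp_inf_iff (h : N' ≤ D) {v : M} (hv : v ∈ D) :
    v ∈ N' ⊔ leftPerp B N ⊓ D ↔ ∃ w ∈ N', ∀ y ∈ N, B v y = B w y := by
  simp only [← sub_mem_leftPerp_iff]
  constructor
  · intro hmem
    obtain ⟨w, hw, c, hc, rfl⟩ := Submodule.mem_sup.mp hmem
    exact ⟨w, hw, by rw [add_sub_cancel_left]; exact hc.1⟩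
  · rintro ⟨w, hw, hvw⟩
    exact Submodule.mem_sup.mpr
      ⟨w, hw, v - w, ⟨hvw, D.sub_mem hv (h hw)⟩, add_sub_cancel w v⟩

theorem le_dualSubmodule_self_of_even [NeZero (2 : S)] (hB : ∀ v w, B v w = B w v)
    (heven : ∀ v ∈ N, ∃ r : R, B v v = 2 * algebraMap R S r) : N ≤ B.dualSubmodule N := by
  intro v hv w hw
  obtain ⟨a, ha⟩ := heven v hv
  obtain ⟨b, hb⟩ := heven w hw
  obtain ⟨c, hc⟩ := heven (v + w) (N.add_mem hv hw)
  have polarization : B (v + w) (v + w) = B v v + B w w + 2 * B v w := by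
    simp only [map_add, LinearMap.add_apply, hB w v]
    ring
  refine Submodule.mem_one.mpr ⟨c - a - b, mul_left_cancel₀ (two_ne_zero (α := S)) ?_⟩
  rw [map_sub, map_sub]
  linear_combination polarization - hc + ha + hb

end DualSubmodule

section RationalForm

variable {V : Type*} [AddCommGroup V] [Module ℚ V] {Φ : LinearMap.BilinForm ℚ V}
  {L I It : Submodule ℤ V}

theorem mem_dualSubmodule_iff_mem_dualL {v : V} : v ∈ Φ.dualSubmodule L ↔ v ∈ dualL Φ L := by
  simp only [LinearMap.BilinForm.mem_dualSubmodule, Submodule.mem_one, dualL, Set.mem_ofPred_eq,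
    eq_intCast, eq_comm]

theorem mem_perp_span_iff (hΦ : Φ.IsRefl) {v : V} :
    v ∈ perp Φ (Submodule.span ℚ (I : Set V)) ↔ v ∈ leftPerp Φ I :=
  calc
    v ∈ perp Φ (Submodule.span ℚ (I : Set V))
      ↔ Submodule.span ℚ (I : Set V) ≤ LinearMap.ker (Φ.flip v) := Iff.rfl
    _ ↔ ∀ y ∈ I, Φ y v = 0 := Submodule.span_le
    _ ↔ v ∈ leftPerp Φ I := forall₂_congr fun _ _ => ⟨hΦ.eq_zero, hΦ.eq_zero⟩

namespace Unimodular

theorem le_dualSubmodule (h : Unimodular Φ It I) : It ≤ Φ.dualSubmodule I :=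
  fun x hx => mem_dualSubmodule_iff_mem_dualL.mpr (h.1 x hx)

theorem disjoint_leftPerp (h : Unimodular Φ It I) : Disjoint (leftPerp Φ I) It := by
  refine Submodule.disjoint_def.mpr fun x hxI hx => (h.2 0).unique ⟨hx, fun y => ?_⟩
    ⟨It.zero_mem, fun y => ?_⟩
  · simpa using hxI y y.2
  · simp

theorem exists_sub_mem_leftPerp (h : Unimodular Φ It I) {v : V} (hv : v ∈ Φ.dualSubmodule I) :
    ∃ x ∈ It, v - x ∈ leftPerp Φ I := by
  obtain ⟨x, ⟨hx, hxv⟩, -⟩ := h.2 (Φ.dualSubmoduleToDual I ⟨v, hv⟩)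
  refine ⟨x, hx, sub_mem_leftPerp_iff.mpr fun y hy => ?_⟩
  exact (Φ.dualSubmoduleParing_spec ⟨v, hv⟩ ⟨y, hy⟩).symm.trans (hxv ⟨y, hy⟩).symm

theorem leftPerp_sup_eq_dualSubmodule (h : Unimodular Φ It I) :
    leftPerp Φ I ⊔ It = Φ.dualSubmodule I := by
  refine le_antisymm (sup_le leftPerp_le_dualSubmodule h.le_dualSubmodule) fun v hv => ?_
  obtain ⟨x, hx, hvx⟩ := h.exists_sub_mem_leftPerp hv
  exact Submodule.mem_sup.mpr ⟨v - x, hvx, x, hx, sub_add_cancel v x⟩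

theorem leftPerp_inf_sup_inf_eq (h : Unimodular Φ It I) {D P : Submodule ℤ V} (hItD : It ≤ D)
    (hDI : D ≤ Φ.dualSubmodule I) (hDP : leftPerp Φ I ⊓ D ≤ P) (hPD : P ≤ D) :
    leftPerp Φ I ⊓ D ⊔ It ⊓ P = P :=
  calc
    leftPerp Φ I ⊓ D ⊔ It ⊓ P = (leftPerp Φ I ⊓ D ⊔ It) ⊓ P := (sup_inf_assoc_of_le It hDP).symm
    _ = (leftPerp Φ I ⊔ It) ⊓ D ⊓ P := by
      rw [inf_comm (leftPerp Φ I), inf_sup_assoc_of_le _ hItD, inf_comm D]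
    _ = D ⊓ P := by rw [h.leftPerp_sup_eq_dualSubmodule, inf_eq_right.mpr hDI]
    _ = P := inf_eq_right.mpr hPD

theorem existsUnique_add (h : Unimodular Φ It I) {D P : Submodule ℤ V} (hItD : It ≤ D)
    (hDI : D ≤ Φ.dualSubmodule I) (hDP : leftPerp Φ I ⊓ D ≤ P) (hPD : P ≤ D) {v : V}
    (hv : v ∈ P) : ∃! p : V × V, p.1 ∈ leftPerp Φ I ⊓ D ∧ p.2 ∈ It ⊓ P ∧ v = p.1 + p.2 :=
  existsUnique_add_of_disjoint_of_mem_sup (h.disjoint_leftPerp.mono inf_le_left inf_le_left)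
    ((h.leftPerp_inf_sup_inf_eq hItD hDI hDP hPD).symm ▸ hv)

end Unimodular

end RationalForm

theorem stmt12_general {V : Type*} [AddCommGroup V] [Module ℚ V]
    (Φ : LinearMap.BilinForm ℚ V) (hΦ : Φ.IsRefl)
    (L : Submodule ℤ V) (hL : (L : Set V) ⊆ dualL Φ L)
    (U : Submodule ℚ V) (I : Submodule ℤ V) (hIL : I ≤ L)
    (hU : U = Submodule.span ℚ (I : Set V))
    (It : Submodule ℤ V) (hItdual : (It : Set V) ⊆ dualL Φ L)
    (hItuni : Unimodular Φ It I) :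
    (∀ μ ∈ dualL Φ L, ∃! p : V × V,
      (p.1 ∈ perp Φ U ∧ p.1 ∈ dualL Φ L) ∧ p.2 ∈ It ∧ μ = p.1 + p.2) ∧
    (∀ μ : V, (∃ l ∈ L, ∃ c : V, (c ∈ perp Φ U ∧ c ∈ dualL Φ L) ∧ μ = l + c) →
      ∃! p : V × V,
        (p.1 ∈ perp Φ U ∧ p.1 ∈ dualL Φ L) ∧
        (p.2 ∈ It ∧ ∃ ν ∈ L, ∀ y ∈ I, Φ p.2 y = Φ ν y) ∧
        μ = p.1 + p.2) := by
  subst hU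
  have hLD : L ≤ Φ.dualSubmodule L := fun v hv => mem_dualSubmodule_iff_mem_dualL.mpr (hL hv)
  have hItD : It ≤ Φ.dualSubmodule L :=
    fun v hv => mem_dualSubmodule_iff_mem_dualL.mpr (hItdual hv)
  have hDI : Φ.dualSubmodule L ≤ Φ.dualSubmodule I := dualSubmodule_anti hIL
  have mem_ItL (x : V) : (x ∈ It ∧ ∃ ν ∈ L, ∀ y ∈ I, Φ x y = Φ ν y) ↔
      x ∈ It ⊓ (L ⊔ leftPerp Φ I ⊓ Φ.dualSubmodule L) :=
    and_congr_right fun hx => (mem_sup_leftPerp_inf_iff hLD (hItD hx)).symm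
  simp only [mem_perp_span_iff hΦ, ← mem_dualSubmodule_iff_mem_dualL, ← Submodule.mem_inf,
    mem_ItL]
  constructor
  · intro μ hμ
    simpa only [inf_eq_left.mpr hItD] using
      hItuni.existsUnique_add hItD hDI inf_le_right le_rfl hμ
  · rintro _ ⟨l, hl, c, hc, rfl⟩
    exact hItuni.existsUnique_add hItD hDI le_sup_right (sup_le hLD inf_le_right)
      (Submodule.add_mem_sup hl hc)

/-- With `L` an even lattice, `U` isotropic spanned by `I = U ∩ L`,
and `Ĩ ⊆ L*` pairing unimodularly with `I`, one has the internal direct sum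
decompositions `L* = I^⊥_{L*} ⊕ Ĩ` and `L + I^⊥_{L*} = I^⊥_{L*} ⊕ Ĩ_L` of
ℤ-modules, where `I^⊥_{L*} = U^⊥ ∩ L*` and
`Ĩ_L = {ũ ∈ Ĩ : ∃ ν ∈ L, (ũ, ·) = (ν, ·) on I}`. -/
theorem stmt12 {V : Type*} [AddCommGroup V] [Module ℚ V] [FiniteDimensional ℚ V]
    (Φ : V →ₗ[ℚ] V →ₗ[ℚ] ℚ)
    (hsymm : ∀ v w : V, Φ v w = Φ w v)
    (hnd : ∀ v : V, (∀ w : V, Φ v w = 0) → v = 0)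
    (L : Submodule ℤ V) (hfg : L.FG)
    (hLspan : Submodule.span ℚ (L : Set V) = ⊤)
    (heven : ∀ x ∈ L, ∃ n : ℤ, Φ x x = 2 * (n : ℚ))
    (U : Submodule ℚ V)
    (hUiso : ∀ u ∈ U, ∀ u' ∈ U, Φ u u' = 0)
    (I : Submodule ℤ V) (hI : I = U.restrictScalars ℤ ⊓ L)
    (hU : U = Submodule.span ℚ (I : Set V))
    (It : Submodule ℤ V) (hItdual : (It : Set V) ⊆ dualL Φ L)
    (hItuni : Unimodular Φ It I) :
    -- L* = I^⊥_{L*} ⊕ Ĩ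
    (∀ μ ∈ dualL Φ L, ∃! p : V × V,
      (p.1 ∈ perp Φ U ∧ p.1 ∈ dualL Φ L) ∧ p.2 ∈ It ∧ μ = p.1 + p.2) ∧
    -- L + I^⊥_{L*} = I^⊥_{L*} ⊕ Ĩ_L
    (∀ μ : V, (∃ l ∈ L, ∃ c : V, (c ∈ perp Φ U ∧ c ∈ dualL Φ L) ∧ μ = l + c) →
      ∃! p : V × V,
        (p.1 ∈ perp Φ U ∧ p.1 ∈ dualL Φ L) ∧
        (p.2 ∈ It ∧ ∃ ν ∈ L, ∀ y ∈ I, Φ p.2 y = Φ ν y) ∧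
        μ = p.1 + p.2) := by
  have hL : L ≤ LinearMap.BilinForm.dualSubmodule Φ L := le_dualSubmodule_self_of_even hsymm heven
  exact stmt12_general Φ (fun v w h => (hsymm w v).trans h) L
    (fun v hv => mem_dualSubmodule_iff_mem_dualL.mp (hL hv)) U I (hI.trans_le inf_le_right) hU It
    hItdual hItuni
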